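/- Let H be a real Hilbert space, (Ω, 𝔽, ℙ) a probability space, and I : H → L²(Ω, ℙ) a linear map such that for every h ∈ H the random variable I(h) has the Gaussian law N(0, ‖h‖²). Let k_p, k₁, …, kₙ ∈ H and let e₁, …, eₙ ∈ H be an orthonormal family orthogonal to k_p and to each kᵢ. Let λ > 0, set Yⱼ = I(kⱼ) + √λ · I(eⱼ) for 1 ≤ j ≤ n, and let K_D be the n×n matrix with [K_D]ᵢⱼ = ⟨kᵢ, kⱼ⟩ and w ∈ ℝⁿ the vector with wⱼ = ⟨kⱼ, k_p⟩. Then, with a = (K_D + λ Iₙ)⁻¹ w, one has E[I(k_p) | σ(Y₁, …, Yₙ)] = Σⱼ₌₁ⁿ aⱼ Yⱼ almost surely. In particular, writing f̂_λ(y) = Σⱼ ((K_D + λ Iₙ)⁻¹ y)ⱼ ⟨kⱼ, k_p⟩ for y ∈ ℝⁿ (the ridge regression prediction), the random variable f̂_λ(Y₁, …, Yₙ) is a version of E[I(k_p) | σ(Y₁, …, Yₙ)]. -/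

import Mathlib

open MeasureTheory ProbabilityTheory
open scoped RealInnerProductSpace Matrix

/-!
Put `gⱼ = kⱼ + √λ eⱼ`, so that `Yⱼ = I(gⱼ)`; the Gram matrix of `g` is `K_D + λ Iₙ`. The normal
equations `(K_D + λ Iₙ) a = w` say precisely that `∑ⱼ aⱼ gⱼ` is the orthogonal projection of `k_p`
onto the span of the `gⱼ`. Since `I` turns inner products into covariances of jointly Gaussian
variables, the residual `I(k_p - ∑ⱼ aⱼ gⱼ)` is uncorrelated with, hence independent of, the `Yⱼ`;
being centered, it contributes nothing to the conditional expectation.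
-/

section Gram

open scoped InnerProductSpace ComplexOrder

variable {𝕜 E ι : Type*} [RCLike 𝕜] [SeminormedAddCommGroup E] [InnerProductSpace 𝕜 E]

lemma gram_mulVec_apply [Fintype ι] (v : ι → E) (a : ι → 𝕜) (i : ι) :
    (Matrix.gram 𝕜 v *ᵥ a) i = ⟪v i, ∑ j, a j • v j⟫_𝕜 := by
  simp only [Matrix.mulVec, dotProduct, Matrix.gram_apply, inner_sum, inner_smul_right, mul_comm]

lemma gram_add_smul_of_orthonormal [DecidableEq ι] {k e : ι → E} (he : Orthonormal 𝕜 e)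
    (hek : ∀ i j, ⟪e i, k j⟫_𝕜 = 0) (c : 𝕜) :
    Matrix.gram 𝕜 (k + c • e) = Matrix.gram 𝕜 k + (star c * c) • (1 : Matrix ι ι 𝕜) := by
  ext i j
  have hke : ⟪k i, e j⟫_𝕜 = 0 := inner_eq_zero_symm.1 (hek j i)
  simp [inner_add_left, inner_add_right, inner_smul_left, inner_smul_right, hek, hke,
    orthonormal_iff_ite.1 he i j, Matrix.one_apply, mul_comm c]

lemma isUnit_gram_add_smul_one [Fintype ι] [DecidableEq ι] (v : ι → E) {r : ℝ} (hr : 0 < r) :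
    IsUnit (Matrix.gram 𝕜 v + r • (1 : Matrix ι ι 𝕜)) :=
  (Matrix.PosDef.posSemidef_add (Matrix.posSemidef_gram 𝕜 v) (Matrix.PosDef.one.smul hr)).isUnit

end Gram

lemma dotProduct_mulVec_comm_of_isSymm {ι R : Type*} [Fintype ι] [CommSemiring R]
    {A : Matrix ι ι R} (hA : A.IsSymm) (u v : ι → R) : (A *ᵥ u) ⬝ᵥ v = (A *ᵥ v) ⬝ᵥ u := by
  rw [dotProduct_comm, ← Matrix.dotProduct_transpose_mulVec, hA.eq, dotProduct_comm]

lemma condExp_add_of_indep {Ω F : Type*} [NormedAddCommGroup F] [NormedSpace ℝ F]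
    [CompleteSpace F] {m₁ m₂ m : MeasurableSpace Ω} {μ : Measure Ω} (hle₁ : m₁ ≤ m) (hle₂ : m₂ ≤ m)
    [SigmaFinite (μ.trim hle₂)] {Z S : Ω → F} (hZ : StronglyMeasurable[m₁] Z)
    (hZ_int : Integrable Z μ) (hS : StronglyMeasurable[m₂] S) (hS_int : Integrable S μ)
    (hindep : Indep m₁ m₂ μ) : μ[Z + S | m₂] =ᵐ[μ] fun ω => μ[Z] + S ω := by
  filter_upwards [condExp_add hZ_int hS_int m₂, condExp_indep_eq hle₁ hle₂ hZ hindep]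
    with ω h_add h_const
  rw [h_add, Pi.add_apply, h_const, condExp_of_stronglyMeasurable hle₂ hS hS_int]

section LpValued

variable {E Ω F 𝕜 : Type*} {m : MeasurableSpace Ω} {μ : Measure Ω} [NormedAddCommGroup F]
  [NormedRing 𝕜] [Module 𝕜 F] [IsBoundedSMul 𝕜 F] [AddCommMonoid E] [Module 𝕜 E] {p : ENNReal}

lemma coeFn_map_add_smul (I : E →ₗ[𝕜] Lp F p μ) (x y : E) (c : 𝕜) :
    I (x + c • y) =ᵐ[μ] fun ω => I x ω + c • I y ω := by
  rw [map_add, map_smul]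
  filter_upwards [Lp.coeFn_add (I x) (c • I y), Lp.coeFn_smul c (I y)] with ω h_add h_smul
  rw [h_add, Pi.add_apply, h_smul, Pi.smul_apply]

lemma coeFn_map_sum_smul {ι : Type*} (I : E →ₗ[𝕜] Lp F p μ) (s : Finset ι) (c : ι → 𝕜)
    (g : ι → E) : I (∑ j ∈ s, c j • g j) =ᵐ[μ] fun ω => ∑ j ∈ s, c j • I (g j) ω := by
  simp only [map_sum, map_smul]
  have h_smul : ∀ᵐ ω ∂μ, ∀ j ∈ s, (c j • I (g j)) ω = c j • I (g j) ω :=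
    (ae_ball_iff s.countable_toSet).2 fun j _ => Lp.coeFn_smul (c j) (I (g j))
  filter_upwards [Lp.coeFn_fun_finsetSum s fun j => c j • I (g j), h_smul] with ω h_sum h_smul
  rw [h_sum, Finset.sum_congr rfl h_smul]

end LpValued

lemma covariance_congr_ae {Ω : Type*} {m : MeasurableSpace Ω} {μ : Measure Ω}
    {X X' Y Y' : Ω → ℝ} (hX : X =ᵐ[μ] X') (hY : Y =ᵐ[μ] Y') : cov[X, Y; μ] = cov[X', Y'; μ] := by
  simp only [covariance, integral_congr_ae hX, integral_congr_ae hY]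
  refine integral_congr_ae ?_
  filter_upwards [hX, hY] with ω h_X h_Y
  rw [h_X, h_Y]

/-- `I` is an isonormal Gaussian process on `E`: a linear map into `L²(P)` under which each `I h`
is centered Gaussian with variance `‖h‖²`. Joint Gaussianity is not part of the definition because
linearity implies it, see `IsIsonormal.isGaussianProcess`. -/
def IsIsonormal {E Ω : Type*} [SeminormedAddCommGroup E] [InnerProductSpace ℝ E]
    [MeasurableSpace Ω] {P : Measure Ω} (I : E →ₗ[ℝ] Lp ℝ 2 P) : Prop :=
  ∀ h : E, HasLaw (I h) (gaussianReal 0 (‖h‖₊ ^ 2)) P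

namespace IsIsonormal

variable {E Ω T : Type*} [SeminormedAddCommGroup E] [InnerProductSpace ℝ E]
  [MeasurableSpace Ω] {P : Measure Ω} {I : E →ₗ[ℝ] Lp ℝ 2 P}

lemma isProbabilityMeasure (hI : IsIsonormal I) : IsProbabilityMeasure P :=
  (hI 0).isProbabilityMeasure

lemma integral_eq_zero (hI : IsIsonormal I) (x : E) : P[I x] = 0 := by
  rw [(hI x).integral_eq, integral_id_gaussianReal]

lemma integrable (hI : IsIsonormal I) (x : E) : Integrable (I x) P :=
  (hI x).hasGaussianLaw.integrable

lemma variance_eq (hI : IsIsonormal I) (x : E) : Var[I x; P] = ‖x‖ ^ 2 := by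
  rw [(hI x).variance_eq, variance_id_gaussianReal, NNReal.coe_pow, coe_nnnorm]

lemma covariance_eq_inner (hI : IsIsonormal I) (x y : E) : cov[I x, I y; P] = ⟪x, y⟫ := by
  have := hI.isProbabilityMeasure
  have h_polar : ‖x + y‖ ^ 2 = ‖x‖ ^ 2 + 2 * cov[I x, I y; P] + ‖y‖ ^ 2 := by
    rw [← hI.variance_eq, map_add, variance_congr (Lp.coeFn_add _ _),
      variance_add (Lp.memLp _) (Lp.memLp _), hI.variance_eq, hI.variance_eq]
  linarith [norm_add_sq_real x y]

lemma isGaussianProcess (hI : IsIsonormal I) : IsGaussianProcess (fun x => ⇑(I x)) P where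
  hasGaussianLaw s := by
    classical
    refine ⟨isGaussian_of_map_eq_gaussianReal fun L => ?_⟩
    let c : s → ℝ := fun i => L fun j => if i = j then 1 else 0
    have h_comp : I (∑ i, c i • (i : E)) =ᵐ[P] L ∘ fun ω => s.restrict fun x => I x ω := by
      filter_upwards [coeFn_map_sum_smul I Finset.univ c fun i : s => (i : E)] with ω h_sum
      rw [h_sum, Function.comp_apply, ← L.coe_coe, LinearMap.pi_apply_eq_sum_univ]
      simp only [c, smul_eq_mul, mul_comm, Finset.restrict, L.coe_coe]
    have h_meas : ∀ x, Measurable (I x) := fun x => (Lp.stronglyMeasurable (I x)).measurable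
    refine ⟨0, ‖∑ i, c i • (i : E)‖₊ ^ 2, ?_⟩
    rw [Measure.map_map (by fun_prop) (by fun_prop), ← Measure.map_congr h_comp]
    exact (hI _).map_eq

lemma indepFun_of_inner_eq_zero (hI : IsIsonormal I) {z : E} {g : T → E} {Y : T → Ω → ℝ}
    (hY : ∀ t, I (g t) =ᵐ[P] Y t) (hz : ∀ t, ⟪z, g t⟫ = 0) :
    IndepFun (I z) (fun ω t => Y t ω) P := by
  have h_joint : IsGaussianProcess (Sum.elim (fun _ : Unit => ⇑(I z)) Y) P :=
    (hI.isGaussianProcess.comp_right (Sum.elim (fun _ : Unit => z) g)).congr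
      (Sum.forall.2 ⟨fun _ => .rfl, hY⟩)
  have h_indep : IndepFun (fun ω (_ : Unit) => I z ω) (fun ω t => Y t ω) P :=
    h_joint.indepFun_of_covariance_eq_zero (fun _ => (hI z).aemeasurable)
      (fun t => (hI (g t)).aemeasurable.congr (hY t)) fun _ t => by
        rw [← covariance_congr_ae .rfl (hY t), hI.covariance_eq_inner, hz]
  exact h_indep.comp (measurable_pi_apply ()) measurable_id

theorem condExp_ae_eq_of_orthogonal (hI : IsIsonormal I) {g : T → E} {Y : T → Ω → ℝ}
    (hY_meas : ∀ t, Measurable (Y t)) (hY : ∀ t, I (g t) =ᵐ[P] Y t) {x p : E}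
    (hp : ∀ t, ⟪x - p, g t⟫ = 0) {S : Ω → ℝ}
    (hS_meas : StronglyMeasurable[⨆ t, MeasurableSpace.comap (Y t) inferInstance] S)
    (hS : I p =ᵐ[P] S) :
    P[I x | ⨆ t, MeasurableSpace.comap (Y t) inferInstance] =ᵐ[P] S := by
  have := hI.isProbabilityMeasure
  have h_decomp : I x =ᵐ[P] ⇑(I (x - p)) + S := by
    rw [map_sub]
    filter_upwards [Lp.coeFn_sub (I x) (I p), hS] with ω h_sub h_S
    rw [Pi.add_apply, h_sub, Pi.sub_apply, h_S, sub_add_cancel]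
  have h_indep : Indep (MeasurableSpace.comap (I (x - p)) inferInstance)
      (⨆ t, MeasurableSpace.comap (Y t) inferInstance) P := by
    rw [← MeasurableSpace.comap_process_pi]
    exact hI.indepFun_of_inner_eq_zero hY hp
  refine (condExp_congr_ae h_decomp).trans ?_
  refine (condExp_add_of_indep (Lp.stronglyMeasurable _).measurable.comap_le
    (iSup_le fun t => (hY_meas t).comap_le) (comap_measurable _).stronglyMeasurable
    (hI.integrable _) hS_meas ((hI.integrable p).congr hS) h_indep).trans ?_
  simp only [hI.integral_eq_zero, zero_add, Filter.EventuallyEq.rfl]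

theorem condExp_ae_eq_sum_of_gram_mulVec_eq [Fintype T] (hI : IsIsonormal I) {g : T → E}
    {Y : T → Ω → ℝ} (hY_meas : ∀ t, Measurable (Y t)) (hY : ∀ t, I (g t) =ᵐ[P] Y t)
    {x : E} {a : T → ℝ} (ha : Matrix.gram ℝ g *ᵥ a = fun t => ⟪g t, x⟫) :
    P[I x | ⨆ t, MeasurableSpace.comap (Y t) inferInstance] =ᵐ[P] fun ω => ∑ t, a t * Y t ω := by
  refine hI.condExp_ae_eq_of_orthogonal hY_meas hY (p := ∑ t, a t • g t) (fun t => ?_) ?_ ?_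
  · rw [real_inner_comm, inner_sub_right, ← gram_mulVec_apply, ha, sub_self]
  · refine Finset.stronglyMeasurable_fun_sum _ fun t _ => StronglyMeasurable.const_mul ?_ (a t)
    exact (measurable_iff_comap_le.2
      (le_iSup (fun t => MeasurableSpace.comap (Y t) _) t)).stronglyMeasurable
  · filter_upwards [coeFn_map_sum_smul I Finset.univ a g, ae_all_iff.2 hY] with ω h_sum h_Y
    simp only [h_sum, h_Y, smul_eq_mul]

end IsIsonormal

theorem ridge_regression_as_conditional_expectation_general
    {E Ω ι : Type*} [SeminormedAddCommGroup E] [InnerProductSpace ℝ E] [Fintype ι] [DecidableEq ι]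
    [MeasurableSpace Ω] {P : Measure Ω} {I : E →ₗ[ℝ] Lp ℝ 2 P} (hI : IsIsonormal I)
    {x : E} {k e : ι → E} (he : Orthonormal ℝ e)
    (hek : ∀ i j, ⟪e i, k j⟫ = 0) (hex : ∀ i, ⟪e i, x⟫ = 0)
    {lam : ℝ} (hlam : 0 ≤ lam) (hunit : IsUnit (Matrix.gram ℝ k + lam • (1 : Matrix ι ι ℝ)))
    {Y : ι → Ω → ℝ} (hY : ∀ j, Y j = fun ω => I (k j) ω + √lam * I (e j) ω)
    {w : ι → ℝ} (hw : ∀ j, w j = ⟪k j, x⟫) :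
    (P[I x | ⨆ j, MeasurableSpace.comap (Y j) inferInstance] =ᵐ[P]
        fun ω => ∑ j, ((Matrix.gram ℝ k + lam • (1 : Matrix ι ι ℝ))⁻¹ *ᵥ w) j * Y j ω) ∧
      (P[I x | ⨆ j, MeasurableSpace.comap (Y j) inferInstance] =ᵐ[P]
        fun ω => ∑ j,
          ((Matrix.gram ℝ k + lam • (1 : Matrix ι ι ℝ))⁻¹ *ᵥ (fun i => Y i ω)) j * w j) := by
  set M := Matrix.gram ℝ k + lam • (1 : Matrix ι ι ℝ)
  have hY_meas : ∀ j, Measurable (Y j) := fun j => by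
    rw [hY]
    exact (Lp.stronglyMeasurable (I (k j))).measurable.add
      ((Lp.stronglyMeasurable (I (e j))).measurable.const_mul √lam)
  have hY_eq : ∀ j, I ((k + √lam • e) j) =ᵐ[P] Y j := fun j =>
    hY j ▸ coeFn_map_add_smul I (k j) (e j) √lam
  have h_gram : Matrix.gram ℝ (k + √lam • e) = M := by
    rw [gram_add_smul_of_orthonormal he hek, star_trivial, Real.mul_self_sqrt hlam]
  have h_normal : Matrix.gram ℝ (k + √lam • e) *ᵥ (M⁻¹ *ᵥ w) = fun j => ⟪(k + √lam • e) j, x⟫ := by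
    rw [h_gram, Matrix.mulVec_mulVec,
      Matrix.mul_nonsing_inv _ ((Matrix.isUnit_iff_isUnit_det M).1 hunit), Matrix.one_mulVec]
    ext j
    simp only [Pi.add_apply, Pi.smul_apply, inner_add_left, real_inner_smul_left, hex, mul_zero,
      add_zero, hw]
  have h_symm : M⁻¹.IsSymm :=
    Matrix.isHermitian_iff_isSymm.1 (h_gram ▸ Matrix.isHermitian_gram ℝ (k + √lam • e)).inv
  have h_condExp := hI.condExp_ae_eq_sum_of_gram_mulVec_eq hY_meas hY_eq h_normal
  exact ⟨h_condExp, h_condExp.trans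
    (.of_forall fun ω => dotProduct_mulVec_comm_of_isSymm h_symm w fun i => Y i ω)⟩

/-- Ridge regression as a conditional expectation with respect to the Gaussian
process `I` (the Paley–Wiener style isometry of an abstract Wiener space):
given noisy observations `Yⱼ = I(kⱼ) + √λ I(eⱼ)` with `(eⱼ)` orthonormal and
orthogonal to `k_p` and all `kᵢ`, the conditional expectation of `I(k_p)` given
`σ(Y₁, …, Yₙ)` is `∑ⱼ aⱼ Yⱼ` with `a = (K_D + λ Iₙ)⁻¹ w`, `wⱼ = ⟪kⱼ, k_p⟫`;
equivalently, it is the ridge-regression prediction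
`f̂_λ(y) = ∑ⱼ ((K_D + λ Iₙ)⁻¹ y)ⱼ ⟪kⱼ, k_p⟫` evaluated at `y = (Y₁, …, Yₙ)`. -/
theorem ridge_regression_as_conditional_expectation
    {H Ω : Type*} [NormedAddCommGroup H] [InnerProductSpace ℝ H] [CompleteSpace H]
    [MeasurableSpace Ω] (P : Measure Ω) [IsProbabilityMeasure P]
    (I : H →ₗ[ℝ] Lp ℝ 2 P)
    (hGauss : ∀ h : H, Measure.map (⇑(I h)) P = gaussianReal 0 (‖h‖₊ ^ 2))
    (n : ℕ) (kp : H) (k : Fin n → H) (e : Fin n → H)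
    (he : Orthonormal ℝ e)
    (hek : ∀ i j, ⟪e i, k j⟫ = 0) (hep : ∀ i, ⟪e i, kp⟫ = 0)
    (lam : ℝ) (hlam : 0 < lam)
    (Y : Fin n → Ω → ℝ)
    (hY : ∀ j, Y j = fun ω => (I (k j)) ω + Real.sqrt lam * (I (e j)) ω)
    (KD : Matrix (Fin n) (Fin n) ℝ) (hKD : ∀ i j, KD i j = ⟪k i, k j⟫)
    (w : Fin n → ℝ) (hw : ∀ j, w j = ⟪k j, kp⟫)
    (a : Fin n → ℝ)
    (ha : a = (KD + lam • (1 : Matrix (Fin n) (Fin n) ℝ))⁻¹ *ᵥ w) :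
    (P[⇑(I kp) | ⨆ j, MeasurableSpace.comap (Y j) inferInstance] =ᵐ[P]
        fun ω => ∑ j, a j * Y j ω) ∧
      (P[⇑(I kp) | ⨆ j, MeasurableSpace.comap (Y j) inferInstance] =ᵐ[P]
        fun ω => ∑ j,
          ((KD + lam • (1 : Matrix (Fin n) (Fin n) ℝ))⁻¹ *ᵥ (fun i => Y i ω)) j
            * w j) := by
  obtain rfl : KD = Matrix.gram ℝ k := Matrix.ext hKD
  subst ha
  exact ridge_regression_as_conditional_expectation_general
    (fun h => ⟨(Lp.stronglyMeasurable (I h)).measurable.aemeasurable, hGauss h⟩) he hek hep hlam.le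
    (isUnit_gram_add_smul_one k hlam) hY hw
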